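/- Let M be a matrix in SL(3,ℤ) whose characteristic polynomial is irreducible over ℚ. Then the set of ς-reduced matrices integer conjugate to M is finite. -/

import Mathlib

/-- 3×3 integer matrices. -/
abbrev M3 : Type := Matrix (Fin 3) (Fin 3) ℤ

/-- Hessenberg complexity ς(M) = a21² · a32. -/
def HessComplexity (M : M3) : ℤ := (M 1 0) ^ 2 * (M 2 1)

/-- A perfect (upper) Hessenberg matrix: a31 = 0, 0 ≤ a11 < a21, 0 ≤ a12 < a32,
0 ≤ a22 < a32. -/
def IsPerfectHessenberg (M : M3) : Prop :=
  M 2 0 = 0 ∧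
  0 ≤ M 0 0 ∧ M 0 0 < M 1 0 ∧
  0 ≤ M 0 1 ∧ M 0 1 < M 2 1 ∧
  0 ≤ M 1 1 ∧ M 1 1 < M 2 1

/-- M₂ = X · M₁ · X⁻¹ for some X ∈ GL(3,ℤ). -/
def IntegerConjugate (M₁ M₂ : M3) : Prop :=
  ∃ X : M3, (X.det = 1 ∨ X.det = -1) ∧ M₂ = X * M₁ * X⁻¹

/-- A ς-reduced matrix: a perfect Hessenberg SL(3,ℤ)-matrix whose Hessenberg
complexity is minimal in its integer conjugacy class. -/
def SigmaReduced (M : M3) : Prop :=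
  M.det = 1 ∧ IsPerfectHessenberg M ∧
  ∀ M' : M3, M'.det = 1 → IsPerfectHessenberg M' → IntegerConjugate M M' →
    HessComplexity M ≤ HessComplexity M'

namespace IntegerConjugate

theorem symm {A B : M3} (h : IntegerConjugate A B) : IntegerConjugate B A := by
  obtain ⟨X, hX, rfl⟩ := h
  have hu : IsUnit X.det := Int.isUnit_iff.2 hX
  refine ⟨X⁻¹, ?_, ?_⟩
  · rw [← Int.isUnit_iff]
    exact X.isUnit_nonsing_inv_det hu
  · rw [Matrix.nonsing_inv_nonsing_inv _ hu]
    simp only [Matrix.mul_assoc, Matrix.nonsing_inv_mul _ hu, Matrix.mul_one]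
    rw [← Matrix.mul_assoc, Matrix.nonsing_inv_mul _ hu, Matrix.one_mul]

theorem trans {A B C : M3} (hAB : IntegerConjugate A B) (hBC : IntegerConjugate B C) :
    IntegerConjugate A C := by
  obtain ⟨X, hX, rfl⟩ := hAB
  obtain ⟨Y, hY, rfl⟩ := hBC
  refine ⟨Y * X, ?_, ?_⟩
  · rw [← Int.isUnit_iff] at *
    rw [Matrix.det_mul]
    exact hY.mul hX
  · rw [Matrix.mul_inv_rev]
    simp only [Matrix.mul_assoc]

theorem trace_eq {A B : M3} (h : IntegerConjugate A B) : B.trace = A.trace := by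
  obtain ⟨X, hX, rfl⟩ := h
  have hu : IsUnit X.det := Int.isUnit_iff.2 hX
  rw [Matrix.trace_mul_comm, ← Matrix.mul_assoc, Matrix.nonsing_inv_mul _ hu, Matrix.one_mul]

theorem mul_self {A B : M3} (h : IntegerConjugate A B) : IntegerConjugate (A * A) (B * B) := by
  obtain ⟨X, hX, rfl⟩ := h
  have hu : IsUnit X.det := Int.isUnit_iff.2 hX
  refine ⟨X, hX, ?_⟩
  simp only [Matrix.mul_assoc]
  rw [← Matrix.mul_assoc X⁻¹ X, Matrix.nonsing_inv_mul _ hu, Matrix.one_mul]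

end IntegerConjugate

/-- A Hessenberg matrix with nonzero subdiagonal entries is determined by its first two columns
together with its trace, the trace of its square and its determinant. -/
theorem hessenberg_ext {A B : M3} (hA : A 2 0 = 0) (hB : B 2 0 = 0)
    (h10 : A 1 0 ≠ 0) (h21 : A 2 1 ≠ 0)
    (e00 : A 0 0 = B 0 0) (e10 : A 1 0 = B 1 0) (e01 : A 0 1 = B 0 1)
    (e11 : A 1 1 = B 1 1) (e21 : A 2 1 = B 2 1)
    (htr : A.trace = B.trace) (hsq : (A * A).trace = (B * B).trace) (hdet : A.det = B.det) :
    A = B := by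
  simp only [Matrix.trace_fin_three, Matrix.mul_apply, Fin.sum_univ_three] at htr hsq
  rw [Matrix.det_fin_three, Matrix.det_fin_three] at hdet
  rw [← e00, ← e11] at htr
  have e22 : A 2 2 = B 2 2 := by linarith
  rw [← e00, ← e11, ← e22, ← e01, ← e10, ← e21, hA, hB] at hsq
  have e12 : A 1 2 = B 1 2 := mul_right_cancel₀ h21 (by linarith)
  rw [← e00, ← e11, ← e22, ← e01, ← e10, ← e21, ← e12, hA, hB] at hdet
  have e02 : A 0 2 = B 0 2 := mul_right_cancel₀ (mul_ne_zero h10 h21) (by linarith)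
  ext i j
  fin_cases i <;> fin_cases j <;> simp [*]

/-- The entries of the first two columns of a perfect Hessenberg matrix lie between `0` and its
Hessenberg complexity. -/
theorem IsPerfectHessenberg.entries_mem_Icc {A : M3} (h : IsPerfectHessenberg A) :
    (A 0 0, A 1 0, A 0 1, A 1 1, A 2 1) ∈
      Set.Icc (0 : ℤ × ℤ × ℤ × ℤ × ℤ) (HessComplexity A, HessComplexity A, HessComplexity A,
        HessComplexity A, HessComplexity A) := by
  obtain ⟨-, h1, h2, h3, h4, h5, h6⟩ := h
  have hp : 1 ≤ A 1 0 := by linarith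
  have hq : 1 ≤ A 2 1 := by linarith
  have hsq : A 1 0 ≤ A 1 0 ^ 2 := by nlinarith
  have h10 : A 1 0 ≤ HessComplexity A := by
    unfold HessComplexity
    nlinarith
  have h21 : A 2 1 ≤ HessComplexity A := by
    unfold HessComplexity
    nlinarith
  simp only [Set.mem_Icc, Prod.le_def, Prod.fst_zero, Prod.snd_zero]
  refine ⟨⟨?_, ?_, ?_, ?_, ?_⟩, ?_, ?_, ?_, ?_, ?_⟩ <;> linarith

/-- For an SL(3,ℤ)-matrix with characteristic polynomial irreducible over ℚ, the
set of ς-reduced matrices integer conjugate to it is finite. -/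
theorem sigma_reduced_representatives_finite (M : M3) (hdet : M.det = 1)
    (hirr : Irreducible (M.charpoly.map (Int.castRingHom ℚ))) :
    {M' : M3 | IntegerConjugate M M' ∧ SigmaReduced M'}.Finite := by
  rcases Set.eq_empty_or_nonempty {M' : M3 | IntegerConjugate M M' ∧ SigmaReduced M'} with
    h | ⟨N, hMN, hNdet, hN, hNmin⟩
  · simp [h]
  refine Set.Finite.of_injOn (f := fun A : M3 => (A 0 0, A 1 0, A 0 1, A 1 1, A 2 1)) ?_ ?_
    (Set.finite_Icc 0 (HessComplexity N, HessComplexity N, HessComplexity N,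
        HessComplexity N, HessComplexity N))
  · rintro A ⟨hMA, hAdet, hA, hAmin⟩
    have hc : HessComplexity A = HessComplexity N :=
      le_antisymm (hAmin N hNdet hN (hMA.symm.trans hMN)) (hNmin A hAdet hA (hMN.symm.trans hMA))
    rw [← hc]
    exact hA.entries_mem_Icc
  · rintro A ⟨hMA, hAdet, hA, -⟩ B ⟨hMB, hBdet, hB, -⟩ hAB
    have hBA := hMB.symm.trans hMA
    simp only [Prod.mk.injEq] at hAB
    obtain ⟨e00, e10, e01, e11, e21⟩ := hAB
    obtain ⟨h20, h1, h2, h3, h4, -⟩ := hA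
    exact hessenberg_ext h20 hB.1 (h1.trans_lt h2).ne' (h3.trans_lt h4).ne' e00 e10 e01 e11 e21
      hBA.trace_eq hBA.mul_self.trace_eq (hAdet.trans hBdet.symm)
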